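/- For every integer n ≥ 5, the domination number of the generalized Petersen graph P(n,2) equals n − ⌊n/5⌋ − ⌊(n+2)/5⌋. -/

import Mathlib

/-!
The formula is `⌈3n/5⌉` written out, so both bounds are compared with `3n/5`.

*Lower bound.* Read a dominating set `S` column by column, the column `i` being `{v_i, u_i}`.
When the columns up to `i` are known, everything that matters for the later columns is
the profile of `i`: the statuses (in `S`, already dominated, still undominated) of `v_i`, `u_i` and
`u_{i-1}`. The function `pot` assigns to each profile the least total of
`5 * (vertices of S in the column) - 3` along a sequence of columns that leads to this
profile from one fixed profile. Hence the potential grows by at most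
`5 * (vertices of S in the column) - 3` from each column to the next, a finite check
(`pot_step`) on eight membership bits. Summing around the cycle, the potential cancels and
`3n ≤ 5|S|` (`three_mul_le`).

*Upper bound.* The vertices `v_j` with `j ≡ 1, 3` and `u_j` with `j ≡ 2` modulo `5`, for
`0 ≤ j < n`, dominate the graph when `n ≡ 0, 3, 4` modulo `5`; for `n ≡ 1, 2` it suffices to add
the single vertex `v_{5⌊n/5⌋}` (`smallSet_domSet`). Counting gives `⌈3n/5⌉` (`smallSet_card`).
-/

/-- The generalized Petersen graph `P(n,k)`: vertices `Sum.inl i` are the outer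
vertices `v_i` and `Sum.inr i` are the inner vertices `u_i` (indices in `ZMod n`);
edges are `v_i v_{i+1}`, `v_i u_i` and `u_i u_{i+k}`. -/
def petersen (n k : ℕ) : SimpleGraph (ZMod n ⊕ ZMod n) :=
  SimpleGraph.fromRel fun a b =>
    match a, b with
    | Sum.inl i, Sum.inl j => j = i + 1
    | Sum.inl i, Sum.inr j => j = i
    | Sum.inr i, Sum.inr j => j = i + (k : ZMod n)
    | _, _ => False

/-- `f` is a Roman domination function on `G`. -/
def IsRDF {V : Type*} (G : SimpleGraph V) (f : V → ℕ) : Prop :=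
  (∀ v, f v ≤ 2) ∧ ∀ v, f v = 0 → ∃ u, G.Adj v u ∧ f u = 2

/-- The weight of a function on the vertices. -/
noncomputable def weight {V : Type*} (f : V → ℕ) : ℕ := ∑ᶠ v, f v

/-- The Roman domination number of `G`. -/
noncomputable def romanDomNum {V : Type*} (G : SimpleGraph V) : ℕ :=
  sInf {w | ∃ f : V → ℕ, IsRDF G f ∧ weight f = w}

/-- `f` is a `γ_R`-function of `G`: an RDF of minimum weight. -/
def IsGammaRFun {V : Type*} (G : SimpleGraph V) (f : V → ℕ) : Prop :=
  IsRDF G f ∧ weight f = romanDomNum G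

/-- `S` is a dominating set of `G`. -/
def IsDomSet {V : Type*} (G : SimpleGraph V) (S : Set V) : Prop :=
  ∀ v, v ∈ S ∨ ∃ u ∈ S, G.Adj u v

/-- The domination number of `G`. -/
noncomputable def domNum {V : Type*} (G : SimpleGraph V) : ℕ :=
  sInf {k | ∃ S : Set V, IsDomSet G S ∧ S.ncard = k}

/-- The function `g_f` associated to an RDF `f` on `P(n,2)`. -/
noncomputable def gf (n : ℕ) (f : ZMod n ⊕ ZMod n → ℕ) (w : ZMod n ⊕ ZMod n) : ℚ :=
  if f w = 2 then 1/2
  else if f w = 1 then 1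
  else (1/2) * (((petersen n 2).neighborSet w) ∩ {u | f u = 2}).ncard

/-- `r_f(S) = Σ_{w ∈ S} (g_f(w) - 1/2)`. -/
noncomputable def rfSum (n : ℕ) (f : ZMod n ⊕ ZMod n → ℕ) (S : Set (ZMod n ⊕ ZMod n)) : ℚ :=
  ∑ᶠ w ∈ S, (gf n f w - 1/2)

/-- The block `V'(i,t) = {v_j, u_j : i ≤ j ≤ i+t-1}`, indices modulo `n`. -/
def Vblock (n : ℕ) (i : ℤ) (t : ℕ) : Set (ZMod n ⊕ ZMod n) :=
  {w | ∃ j : ℤ, i ≤ j ∧ j ≤ i + t - 1 ∧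
    (w = Sum.inl ((j : ℤ) : ZMod n) ∨ w = Sum.inr ((j : ℤ) : ZMod n))}

/-- `f` has minimum cardinality of `V₂` among `γ_R`-functions of `P(n,2)`. -/
def MinV2 (n : ℕ) (f : ZMod n ⊕ ZMod n → ℕ) : Prop :=
  ∀ f' : ZMod n ⊕ ZMod n → ℕ, IsGammaRFun (petersen n 2) f' →
    {v | f v = 2}.ncard ≤ {v | f' v = 2}.ncard

/-! ### Lower bound -/

/-- The status of a vertex: `2` if it is in the set, `1` if it is outside but already dominated,
`0` otherwise. -/
def status (s d : Bool) : ℕ := if s then 2 else if d then 1 else 0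

/-- The potential of the profile `(a, b, c)`, the statuses of `v_i`, `u_i`, `u_{i-1}`:
shortest-path distances from the profile `(0, 1, 0)`, listed in the order of `9a + 3b + c`.
Profiles that do not occur in a dominating set have the entry `0`. -/
def pot (a b c : ℕ) : ℤ :=
  [1, 3, 4, 0, 7, 5, 0, 0, 0, 0, 4, 4, 0, 6, 10, 6, 7, 8, 0, 0, 0, 5, 7, 9, 8, 7, 13].getD
    (9 * a + 3 * b + c) 0

/-- The change of the potential from column `0` to column `1`. The bits `x1, x0, xm` say which of
`v_1, v_0, v_{-1}` are chosen, and `y1, y0, ym, ym2, ym3` which of `u_1, u_0, u_{-1}, u_{-2}, u_{-3}`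
are; the hypotheses say that `v_0` and `u_{-1}` are dominated. -/
lemma pot_step : ∀ x1 y1 x0 y0 xm ym ym2 ym3 : Bool,
    (x0 || xm || x1 || y0) = true → (ym || ym3 || y1 || xm) = true →
    pot (status x1 (y1 || x0)) (status y1 (x1 || ym)) (status y0 (x0 || ym2))
      - pot (status x0 (y0 || xm)) (status y0 (x0 || ym2)) (status ym (xm || ym3))
      ≤ 5 * ((x1.toNat : ℤ) + y1.toNat) - 3 := by
  decide

lemma domSet_outer {n : ℕ} {S : Set (ZMod n ⊕ ZMod n)} (hS : IsDomSet (petersen n 2) S)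
    (i : ZMod n) : Sum.inl i ∈ S ∨ Sum.inl (i - 1) ∈ S ∨ Sum.inl (i + 1) ∈ S ∨ Sum.inr i ∈ S := by
  rcases hS (Sum.inl i) with h | ⟨u | u, hu, h⟩
  · exact Or.inl h
  · simp only [petersen, SimpleGraph.fromRel_adj] at h
    rcases h.2 with h | h
    · obtain rfl : u = i - 1 := by rw [h]; ring
      tauto
    · subst h; tauto
  · simp only [petersen, SimpleGraph.fromRel_adj] at h
    rcases h.2 with h | h
    · exact h.elim
    · subst h; tauto

lemma domSet_inner {n : ℕ} {S : Set (ZMod n ⊕ ZMod n)} (hS : IsDomSet (petersen n 2) S)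
    (i : ZMod n) : Sum.inr i ∈ S ∨ Sum.inr (i - 2) ∈ S ∨ Sum.inr (i + 2) ∈ S ∨ Sum.inl i ∈ S := by
  rcases hS (Sum.inr i) with h | ⟨u | u, hu, h⟩
  · exact Or.inl h
  · simp only [petersen, SimpleGraph.fromRel_adj] at h
    rcases h.2 with h | h
    · subst h; tauto
    · exact h.elim
  · simp only [petersen, SimpleGraph.fromRel_adj, Nat.cast_ofNat] at h
    rcases h.2 with h | h
    · obtain rfl : u = i - 2 := by rw [h]; ring
      tauto
    · subst h; tauto

open Classical in
lemma three_mul_le {n : ℕ} [NeZero n] {S : Set (ZMod n ⊕ ZMod n)}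
    (hS : IsDomSet (petersen n 2) S) : 3 * n ≤ 5 * S.ncard := by
  let x : ZMod n → Bool := fun i => decide (Sum.inl i ∈ S)
  let y : ZMod n → Bool := fun i => decide (Sum.inr i ∈ S)
  have hcard : (S.ncard : ℤ) = ∑ i, (((x i).toNat : ℤ) + (y i).toNat) := by
    have h1 : S.ncard = ∑ w, if w ∈ S then 1 else 0 := by
      rw [Finset.sum_boole, Set.ncard_eq_toFinset_card']
      simp
    rw [h1, Fintype.sum_sum_type, Finset.sum_add_distrib]
    push_cast
    congr 1 <;> refine Finset.sum_congr rfl fun i _ => ?_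
    · by_cases h : Sum.inl i ∈ S <;> simp [x, h]
    · by_cases h : Sum.inr i ∈ S <;> simp [y, h]
  let p : ZMod n → ℤ := fun i =>
    pot (status (x i) (y i || x (i - 1))) (status (y i) (x i || y (i - 2)))
      (status (y (i - 1)) (x (i - 1) || y (i - 3)))
  have step (i : ZMod n) :
      p (i + 1) - p i ≤ 5 * (((x (i + 1)).toNat : ℤ) + (y (i + 1)).toNat) - 3 := by
    have h := pot_step (x (i + 1)) (y (i + 1)) (x i) (y i) (x (i - 1)) (y (i - 1)) (y (i - 2))
      (y (i - 3)) (by simpa [x, y, or_assoc] using domSet_outer hS i) (by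
        have := domSet_inner hS (i - 1)
        rw [show i - 1 - 2 = i - 3 by ring, show i - 1 + 2 = i + 1 by ring] at this
        simpa [x, y, or_assoc] using this)
    have e1 : i + 1 - 1 = i := by ring
    have e2 : i + 1 - 2 = i - 1 := by ring
    have e3 : i + 1 - 3 = i - 2 := by ring
    simpa only [p, e1, e2, e3] using h
  have hsum := Finset.sum_le_sum fun i (_ : i ∈ Finset.univ) => step i
  have shift (f : ZMod n → ℤ) : ∑ i, f (i + 1) = ∑ i, f i := 
    Equiv.sum_comp (Equiv.addRight (1 : ZMod n)) f
  rw [Finset.sum_sub_distrib, Finset.sum_sub_distrib, ← Finset.mul_sum, shift p,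
    shift fun i => ((x i).toNat : ℤ) + (y i).toNat, ← hcard] at hsum
  simp only [Finset.sum_const, Finset.card_univ, ZMod.card, nsmul_eq_mul] at hsum
  lia

/-! ### Upper bound -/

/-- The outer vertices `v_j` of the small dominating set, for `0 ≤ j < n`: those with `j ≡ 1, 3`
modulo `5` and, when `n ≡ 1, 2` modulo `5`, also the index `j = 5⌊n/5⌋`. -/
def OuterIn (n j : ℕ) : Prop :=
  j % 5 = 1 ∨ j % 5 = 3 ∨ (j % 5 = 0 ∧ j / 5 = n / 5 ∧ (n % 5 = 1 ∨ n % 5 = 2))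

/-- The small dominating set, whose inner vertices are the `u_j` with `j ≡ 2` modulo `5`. -/
def smallSet (n : ℕ) : Set (ZMod n ⊕ ZMod n) :=
  {w | ∃ j < n, (w = Sum.inl (j : ZMod n) ∧ OuterIn n j) ∨ (w = Sum.inr (j : ZMod n) ∧ j % 5 = 2)}

lemma petersen_adj_outer {n : ℕ} (hn : 2 ≤ n) (i : ZMod n) :
    (petersen n 2).Adj (Sum.inl i) (Sum.inl (i + 1)) := by
  have : Fact (1 < n) := ⟨hn⟩
  simp [petersen]

lemma petersen_adj_inner {n : ℕ} (hn : 3 ≤ n) (i : ZMod n) :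
    (petersen n 2).Adj (Sum.inr i) (Sum.inr (i + 2)) := by
  have h2 : (2 : ZMod n) ≠ 0 := by
    intro h
    have : ((2 : ℕ) : ZMod n) = 0 := by exact_mod_cast h
    rw [ZMod.natCast_eq_zero_iff] at this
    exact absurd (Nat.le_of_dvd (by norm_num) this) (by lia)
  simp [petersen, h2]

lemma petersen_adj_spoke {n : ℕ} (i : ZMod n) :
    (petersen n 2).Adj (Sum.inl i) (Sum.inr i) := by
  simp [petersen]

lemma smallSet_domSet {n : ℕ} (hn : 5 ≤ n) : IsDomSet (petersen n 2) (smallSet n) := by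
  have : NeZero n := ⟨by lia⟩
  have memO {j : ℕ} (h : j < n) (h' : OuterIn n j) : Sum.inl (j : ZMod n) ∈ smallSet n :=
    ⟨j, h, Or.inl ⟨rfl, h'⟩⟩
  have memI {j : ℕ} (h : j < n) (h' : j % 5 = 2) : Sum.inr (j : ZMod n) ∈ smallSet n :=
    ⟨j, h, Or.inr ⟨rfl, h'⟩⟩
  rintro (i | i) <;> obtain ⟨j, hj, rfl⟩ : ∃ j < n, (j : ZMod n) = i :=
    ⟨i.val, i.val_lt, ZMod.natCast_zmod_val i⟩
  · have key : OuterIn n j ∨ j % 5 = 2 ∨ (1 ≤ j ∧ OuterIn n (j - 1)) ∨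
        (j + 1 < n ∧ OuterIn n (j + 1)) := by
      have hr : j % 5 = 0 ∨ j % 5 = 1 ∨ j % 5 = 2 ∨ j % 5 = 3 ∨ j % 5 = 4 := by omega
      rcases hr with hr | hr | hr | hr | hr
      · by_cases hl : j + 1 < n
        · exact Or.inr (Or.inr (Or.inr ⟨hl, Or.inl (by omega)⟩))
        -- here `j = n - 1` with `n ≡ 1`, so `v_j` is the additional vertex
        · exact Or.inl (Or.inr (Or.inr (by omega)))
      · exact Or.inl (Or.inl hr)
      · exact Or.inr (Or.inl hr)
      · exact Or.inl (Or.inr (Or.inl hr))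
      · exact Or.inr (Or.inr (Or.inl ⟨by omega, Or.inr (Or.inl (by omega))⟩))
    rcases key with h | h | ⟨h1, h⟩ | ⟨h1, h⟩
    · exact Or.inl (memO hj h)
    · exact Or.inr ⟨_, memI hj h, (petersen_adj_spoke _).symm⟩
    · refine Or.inr ⟨_, memO (by lia) h, ?_⟩
      convert petersen_adj_outer (by lia) ((j - 1 : ℕ) : ZMod n) using 2
      rw [Nat.cast_sub h1]; push_cast; ring
    · refine Or.inr ⟨_, memO h1 h, ?_⟩
      push_cast
      exact (petersen_adj_outer (by lia) _).symm
  · have key : j % 5 = 2 ∨ OuterIn n j ∨ (2 ≤ j ∧ (j - 2) % 5 = 2) ∨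
        (j < 2 ∧ (n + j - 2) % 5 = 2) ∨ (j + 2 < n ∧ (j + 2) % 5 = 2) := by
      unfold OuterIn; lia
    rcases key with h | h | ⟨h1, h⟩ | ⟨h1, h⟩ | ⟨h1, h⟩
    · exact Or.inl (memI hj h)
    · exact Or.inr ⟨_, memO hj h, petersen_adj_spoke _⟩
    · refine Or.inr ⟨_, memI (by lia) h, ?_⟩
      convert petersen_adj_inner (by lia) ((j - 2 : ℕ) : ZMod n) using 2
      rw [Nat.cast_sub h1]; push_cast; ring
    · refine Or.inr ⟨_, memI (by lia) h, ?_⟩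
      convert petersen_adj_inner (by lia) ((n + j - 2 : ℕ) : ZMod n) using 2
      rw [Nat.cast_sub (by lia)]; simp
    · refine Or.inr ⟨_, memI h1 h, ?_⟩
      push_cast
      exact (petersen_adj_inner (by lia) _).symm

open Classical in
lemma smallSet_card (n : ℕ) : (smallSet n).ncard ≤ (3 * n + 4) / 5 := by
  let A : Finset (ZMod n ⊕ ZMod n) :=
    (Finset.range ((n + 3) / 5)).image fun t => Sum.inl ((5 * t + 1 : ℕ) : ZMod n)
  let B : Finset (ZMod n ⊕ ZMod n) :=
    (Finset.range ((n + 2) / 5)).image fun t => Sum.inr ((5 * t + 2 : ℕ) : ZMod n)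
  let C : Finset (ZMod n ⊕ ZMod n) :=
    (Finset.range ((n + 1) / 5)).image fun t => Sum.inl ((5 * t + 3 : ℕ) : ZMod n)
  let D : Finset (ZMod n ⊕ ZMod n) :=
    if n % 5 = 1 ∨ n % 5 = 2 then {Sum.inl ((5 * (n / 5) : ℕ) : ZMod n)} else ∅
  have hA : A.card ≤ (n + 3) / 5 := Finset.card_image_le.trans_eq (Finset.card_range _)
  have hB : B.card ≤ (n + 2) / 5 := Finset.card_image_le.trans_eq (Finset.card_range _)
  have hC : C.card ≤ (n + 1) / 5 := Finset.card_image_le.trans_eq (Finset.card_range _)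
  have hD : D.card ≤ if n % 5 = 1 ∨ n % 5 = 2 then 1 else 0 := by
    by_cases h : n % 5 = 1 ∨ n % 5 = 2 <;> simp [D, h]
  have hsub : smallSet n ⊆ ((A ∪ B ∪ (C ∪ D) : Finset _) : Set (ZMod n ⊕ ZMod n)) := by
    rintro w ⟨j, hj, ⟨rfl, h | h | ⟨h, h', hr⟩⟩ | ⟨rfl, h⟩⟩ <;>
      simp only [Finset.coe_union, Set.mem_union, Finset.mem_coe]
    · refine Or.inl (Or.inl (Finset.mem_image.2 ⟨j / 5, Finset.mem_range.2 (by lia), ?_⟩))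
      rw [show 5 * (j / 5) + 1 = j by lia]
    · refine Or.inr (Or.inl (Finset.mem_image.2 ⟨j / 5, Finset.mem_range.2 (by lia), ?_⟩))
      rw [show 5 * (j / 5) + 3 = j by lia]
    · refine Or.inr (Or.inr ?_)
      simp only [D, if_pos hr, Finset.mem_singleton]
      rw [show 5 * (n / 5) = j by lia]
    · refine Or.inl (Or.inr (Finset.mem_image.2 ⟨j / 5, Finset.mem_range.2 (by lia), ?_⟩))
      rw [show 5 * (j / 5) + 2 = j by lia]
  have h1 := Set.ncard_le_ncard hsub (Finset.finite_toSet _)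
  rw [Set.ncard_coe_finset] at h1
  have h2 := Finset.card_union_le (A ∪ B) (C ∪ D)
  have h3 := Finset.card_union_le A B
  have h4 := Finset.card_union_le C D
  split_ifs at hD <;> lia

/-- For every integer `n ≥ 5`, the domination number of the generalized Petersen
graph `P(n,2)` equals `n − ⌊n/5⌋ − ⌊(n+2)/5⌋`. -/
theorem domination_number_petersen_n_2 (n : ℕ) (hn : 5 ≤ n) :
    (domNum (petersen n 2) : ℤ) = n - ⌊(n : ℚ) / 5⌋ - ⌊((n : ℚ) + 2) / 5⌋ := by
  have : NeZero n := ⟨by lia⟩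
  have hmem : ∃ S, IsDomSet (petersen n 2) S ∧ S.ncard = (smallSet n).ncard :=
    ⟨_, smallSet_domSet hn, rfl⟩
  have hle : domNum (petersen n 2) ≤ (smallSet n).ncard := Nat.sInf_le hmem
  obtain ⟨S, hS, hc⟩ : ∃ S, IsDomSet (petersen n 2) S ∧ S.ncard = domNum (petersen n 2) :=
    Nat.sInf_mem (s := {k | ∃ S, IsDomSet (petersen n 2) S ∧ S.ncard = k}) ⟨_, hmem⟩
  have hge := three_mul_le hS
  have hcard := smallSet_card n
  have f1 : ⌊(n : ℚ) / 5⌋ = ((n / 5 : ℕ) : ℤ) := by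
    simpa using Rat.floor_intCast_div_natCast (n : ℤ) 5
  have f2 : ⌊((n : ℚ) + 2) / 5⌋ = (((n + 2) / 5 : ℕ) : ℤ) := by
    simpa using Rat.floor_intCast_div_natCast ((n + 2 : ℕ) : ℤ) 5
  rw [f1, f2]
  lia
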